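/- Let λ_1, λ_2, … be distinct real numbers with λ_j > −1/2, define K_n(x) = ∑_{j=1}^n a_{j,n} x^{λ_j} on (0,1] with a_{j,n} = (∏_{l=1}^n (λ_j + λ_l + 1)) / (∏_{l=1, l≠j}^n (λ_j − λ_l)), and ρ_n(x) = 1 − ∫_1^x K_n(1/r) (dr/r) for x ≥ 1. Then for all integers 1 ≤ m < n, ∫_0^1 ( ρ_n(1/v) − ρ_m(1/v) )² dv ≤ 4 ∫_0^1 (K_n(u) − K_m(u))² du = 4 ∑_{j=m+1}^n (1 + 2λ_j). -/

import Mathlib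

open Finset MeasureTheory intervalIntegral

/-- The coefficients `a_{j,n}` of the Müntz polynomial `K_n`. -/
noncomputable def muntzA (lam : ℕ → ℝ) (n j : ℕ) : ℝ :=
  (∏ l ∈ Finset.Icc 1 n, (lam j + lam l + 1)) /
    (∏ l ∈ (Finset.Icc 1 n).erase j, (lam j - lam l))

/-- The Müntz polynomial `K_n(x) = ∑_{j=1}^n a_{j,n} x^{λ_j}`. -/
noncomputable def muntzK (lam : ℕ → ℝ) (n : ℕ) (x : ℝ) : ℝ :=
  ∑ j ∈ Finset.Icc 1 n, muntzA lam n j * x ^ lam j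

/-- `ρ_n(x) = 1 - ∫_1^x K_n(1/r) dr/r` for `x ≥ 1`. -/
noncomputable def muntzRho (lam : ℕ → ℝ) (n : ℕ) (x : ℝ) : ℝ :=
  1 - ∫ r in (1:ℝ)..x, muntzK lam n (1 / r) / r

/-- The divided difference at the nodes `v` of `∏ l ∈ s.erase k, (x + w l)`, a monic polynomial of
degree `#s - 1`, is `1`. -/
lemma sum_prod_erase_add_div_prod_erase_sub {ι : Type*} [DecidableEq ι] {s : Finset ι}
    {v : ι → ℝ} (hv : Set.InjOn v s) (w : ι → ℝ) {k : ι} (hk : k ∈ s) :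
    ∑ j ∈ s, (∏ l ∈ s.erase k, (v j + w l)) / ∏ l ∈ s.erase j, (v j - v l) = 1 := by
  set P : Polynomial ℝ := ∏ l ∈ s.erase k, (Polynomial.X + Polynomial.C (w l))
  have hmonic : P.Monic := Polynomial.monic_prod_of_monic _ _ fun l _ => Polynomial.monic_X_add_C _
  have hdeg : P.natDegree = #s - 1 := by
    rw [Polynomial.natDegree_prod_of_monic _ _ fun l _ => Polynomial.monic_X_add_C _]
    simp [card_erase_of_mem hk]
  have hcard : 0 < #s := card_pos.mpr ⟨k, hk⟩
  have hlt : P.degree < #s := by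
    rw [Polynomial.degree_eq_natDegree hmonic.ne_zero, hdeg]
    exact_mod_cast Nat.sub_lt hcard one_pos
  have h := Lagrange.coeff_eq_sum hv hlt
  rw [← hdeg, hmonic.coeff_natDegree] at h
  rw [h]
  simp [P, Polynomial.eval_prod]

/-- The divided difference of the full product `∏ (x + w l)` at the nodes `v`. -/
lemma sum_prod_add_div_prod_erase_sub {ι : Type*} [DecidableEq ι] {s : Finset ι}
    {v : ι → ℝ} (hv : Set.InjOn v s) (w : ι → ℝ) :
    ∑ j ∈ s, (∏ l ∈ s, (v j + w l)) / ∏ l ∈ s.erase j, (v j - v l) = ∑ l ∈ s, (v l + w l) := by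
  rcases s.eq_empty_or_nonempty with rfl | hs
  · simp
  set P : Polynomial ℝ := ∏ l ∈ s, (Polynomial.X - Polynomial.C (-w l))
  set Q : Polynomial ℝ := ∏ l ∈ s, (Polynomial.X - Polynomial.C (v l))
  have hP : P.Monic := Polynomial.monic_prod_of_monic _ _ fun l _ => Polynomial.monic_X_sub_C _
  have hQ : Q.Monic := Polynomial.monic_prod_of_monic _ _ fun l _ => Polynomial.monic_X_sub_C _
  have hPdeg : P.degree = #s := by simp [P, Polynomial.degree_prod]
  have hQdeg : Q.degree = #s := by simp [Q, Polynomial.degree_prod]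
  have hlt : (P - Q).degree < #s := hPdeg ▸ Polynomial.degree_sub_lt_left (hPdeg.trans hQdeg.symm)
    hP.ne_zero (hP.leadingCoeff.trans hQ.leadingCoeff.symm)
  have h := Lagrange.coeff_eq_sum hv hlt
  rw [Polynomial.coeff_sub, Polynomial.prod_X_sub_C_coeff_card_pred _ _ hs.card_pos,
    Polynomial.prod_X_sub_C_coeff_card_pred _ _ hs.card_pos] at h
  have hsum : ∑ l ∈ s, (v l + w l) = -∑ l ∈ s, -w l - -∑ l ∈ s, v l := by
    rw [sum_neg_distrib, sum_add_distrib]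
    ring
  rw [hsum, h]
  refine sum_congr rfl fun j hj => ?_
  have hroot : Q.eval (v j) = 0 := by
    rw [Polynomial.eval_prod]
    exact prod_eq_zero hj (by simp)
  rw [Polynomial.eval_sub, hroot, sub_zero, Polynomial.eval_prod]
  simp

lemma intervalIntegrable_and_integral_sum_rpow_mul_sum_rpow {ι : Type*} {lam : ι → ℝ}
    (s t : Finset ι) (hs : ∀ j ∈ s, -(1 / 2 : ℝ) < lam j) (ht : ∀ j ∈ t, -(1 / 2 : ℝ) < lam j)
    (a b : ι → ℝ) :
    IntervalIntegrable (fun x : ℝ => (∑ j ∈ s, a j * x ^ lam j) * ∑ k ∈ t, b k * x ^ lam k)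
        volume 0 1 ∧
      ∫ x in (0 : ℝ)..1, (∑ j ∈ s, a j * x ^ lam j) * ∑ k ∈ t, b k * x ^ lam k =
        ∑ k ∈ t, b k * ∑ j ∈ s, a j / (lam j + lam k + 1) := by
  have hexp : ∀ k ∈ t, ∀ j ∈ s, -1 < lam j + lam k := fun k hk j hj => by
    linarith [hs j hj, ht k hk]
  have hint : ∀ k ∈ t, ∀ j ∈ s,
      IntervalIntegrable (fun x : ℝ => a j * x ^ (lam j + lam k)) volume 0 1 :=
    fun k hk j hj => (intervalIntegrable_rpow' (hexp k hk j hj)).const_mul _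
  have hint' : ∀ k ∈ t,
      IntervalIntegrable (fun x : ℝ => b k * ∑ j ∈ s, a j * x ^ (lam j + lam k)) volume 0 1 :=
    fun k hk => by simpa only [sum_fn] using (IntervalIntegrable.sum s (hint k hk)).const_mul (b k)
  have heq : Set.EqOn (fun x : ℝ => ∑ k ∈ t, b k * ∑ j ∈ s, a j * x ^ (lam j + lam k))
      (fun x : ℝ => (∑ j ∈ s, a j * x ^ lam j) * ∑ k ∈ t, b k * x ^ lam k) (Set.uIoc 0 1) := by
    intro x hx
    rw [Set.uIoc_of_le zero_le_one] at hx
    dsimp only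
    rw [mul_sum]
    refine sum_congr rfl fun k _ => ?_
    rw [mul_sum, sum_mul]
    refine sum_congr rfl fun j _ => ?_
    rw [Real.rpow_add hx.1]
    ring
  have htotal := IntervalIntegrable.sum t hint'
  rw [sum_fn] at htotal
  refine ⟨htotal.congr heq, ?_⟩
  rw [← integral_congr_ae (Filter.Eventually.of_forall heq), integral_finsetSum hint']
  refine sum_congr rfl fun k hk => ?_
  rw [intervalIntegral.integral_const_mul, integral_finsetSum (hint k hk)]
  congr 1
  refine sum_congr rfl fun j hj => ?_
  have hne : lam j + lam k + 1 ≠ 0 := by linarith [hexp k hk j hj]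
  rw [intervalIntegral.integral_const_mul, integral_rpow (Or.inl (hexp k hk j hj)),
    Real.one_rpow, Real.zero_rpow hne, sub_zero, mul_one_div]

/-- Hardy's inequality on `(0, 1]`: `H` plays the role of `v ↦ ∫_v^1 g(r)/r dr`. -/
lemma hardy_integral_sq_le {g H : ℝ → ℝ} (hg : ContinuousOn g (Set.Ioi 0))
    (hg2 : IntervalIntegrable (fun u => g u ^ 2) volume 0 1)
    (hH : ∀ v, 0 < v → HasDerivAt H (-(g v / v)) v) (hH1 : H 1 = 0) :
    ∫ v in (0 : ℝ)..1, H v ^ 2 ≤ 4 * ∫ u in (0 : ℝ)..1, g u ^ 2 := by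
  by_cases hH2 : IntervalIntegrable (fun v => H v ^ 2) volume 0 1
  swap
  · rw [integral_undef hH2]
    exact mul_nonneg (by norm_num) (integral_nonneg zero_le_one fun u _ => sq_nonneg _)
  have hHcont : ContinuousOn H (Set.Ioi 0) := fun v hv => (hH v hv).continuousAt.continuousWithinAt
  have hdiff : IntervalIntegrable (fun v => 4 * g v ^ 2 - H v ^ 2) volume 0 1 :=
    (hg2.const_mul 4).sub hH2
  have htrunc : ∀ ε ∈ Set.Ioc (0 : ℝ) 1, 0 ≤ ∫ v in ε..1, (4 * g v ^ 2 - H v ^ 2) := by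
    rintro ε ⟨hε, hε1⟩
    have hsub : Set.uIcc ε 1 ⊆ Set.Ioi 0 := by
      rw [Set.uIcc_of_le hε1]
      exact fun x hx => hε.trans_le hx.1
    have hgε := hg.mono hsub
    have hHε := hHcont.mono hsub
    have hderiv : ∀ v ∈ Set.uIcc ε 1,
        HasDerivAt (fun v => v * H v ^ 2) (H v ^ 2 - 2 * H v * g v) v := by
      intro v hv
      have hv0 : v ≠ 0 := (hsub hv).ne'
      refine ((hasDerivAt_id v).mul ((hH v (hsub hv)).pow 2)).congr_deriv ?_
      simp only [id, Pi.pow_apply]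
      field_simp
      ring
    have hderivInt : IntervalIntegrable (fun v => H v ^ 2 - 2 * H v * g v) volume ε 1 :=
      ContinuousOn.intervalIntegrable (by fun_prop)
    have hsqInt : IntervalIntegrable (fun v => (H v - 2 * g v) ^ 2) volume ε 1 :=
      ContinuousOn.intervalIntegrable (by fun_prop)
    have hparts := integral_eq_sub_of_hasDerivAt hderiv hderivInt
    have hsq : 0 ≤ ∫ v in ε..1, (H v - 2 * g v) ^ 2 :=
      integral_nonneg hε1 fun v _ => sq_nonneg _
    have hsplit : ∫ v in ε..1, (4 * g v ^ 2 - H v ^ 2) =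
        (∫ v in ε..1, (H v - 2 * g v) ^ 2) - 2 * ∫ v in ε..1, (H v ^ 2 - 2 * H v * g v) := by
      rw [← intervalIntegral.integral_const_mul, ← integral_sub hsqInt (hderivInt.const_mul 2)]
      exact integral_congr fun v _ => by ring
    rw [hsplit, hparts, hH1]
    have : 0 ≤ ε * H ε ^ 2 := by positivity
    linarith
  have hcont : ContinuousWithinAt (fun ε => ∫ v in ε..1, (4 * g v ^ 2 - H v ^ 2))
      (Set.Ioc 0 1) 0 := by
    have h := continuousOn_primitive_interval_left
      (by rwa [← intervalIntegrable_iff' (by finiteness)] :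
        IntegrableOn (fun v => 4 * g v ^ 2 - H v ^ 2) (Set.uIcc 0 1) volume)
    rw [Set.uIcc_of_le zero_le_one] at h
    exact (h 0 (by simp)).mono Set.Ioc_subset_Icc_self
  have : (nhdsWithin (0 : ℝ) (Set.Ioc 0 1)).NeBot := by
    rw [nhdsWithin_Ioc_eq_nhdsGT zero_lt_one]
    infer_instance
  have hlim : 0 ≤ ∫ v in (0 : ℝ)..1, (4 * g v ^ 2 - H v ^ 2) :=
    ge_of_tendsto hcont (eventually_mem_nhdsWithin.mono htrunc)
  rw [integral_sub (hg2.const_mul 4) hH2, intervalIntegral.integral_const_mul] at hlim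
  linarith

lemma injOn_Icc_of_distinct {lam : ℕ → ℝ}
    (hdist : ∀ j k, 1 ≤ j → 1 ≤ k → j ≠ k → lam j ≠ lam k) (n : ℕ) :
    Set.InjOn lam (Icc 1 n : Finset ℕ) := by
  intro j hj k hk h
  by_contra hne
  exact hdist j k (mem_Icc.mp hj).1 (mem_Icc.mp hk).1 hne h

/-- Reproducing property of `K_n` at `1`: `∫_0^1 K_n(x) x^{λ_k} dx = 1` for `k ≤ n`. -/
lemma sum_muntzA_div {lam : ℕ → ℝ} (hpos : ∀ j, 1 ≤ j → lam j > -(1 / 2 : ℝ))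
    (hdist : ∀ j k, 1 ≤ j → 1 ≤ k → j ≠ k → lam j ≠ lam k) {n k : ℕ} (hk : k ∈ Icc 1 n) :
    ∑ j ∈ Icc 1 n, muntzA lam n j / (lam j + lam k + 1) = 1 := by
  refine (sum_congr rfl fun j hj => ?_).trans (sum_prod_erase_add_div_prod_erase_sub
    (injOn_Icc_of_distinct hdist n) (fun l => lam l + 1) hk)
  have hne : lam j + lam k + 1 ≠ 0 := by
    linarith [hpos j (mem_Icc.mp hj).1, hpos k (mem_Icc.mp hk).1]
  rw [muntzA, ← mul_prod_erase _ _ hk, div_right_comm, mul_div_cancel_left₀ _ hne]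
  simp only [add_assoc]

lemma sum_muntzA {lam : ℕ → ℝ} (hdist : ∀ j k, 1 ≤ j → 1 ≤ k → j ≠ k → lam j ≠ lam k) (n : ℕ) :
    ∑ j ∈ Icc 1 n, muntzA lam n j = ∑ j ∈ Icc 1 n, (1 + 2 * lam j) := by
  have h := sum_prod_add_div_prod_erase_sub (injOn_Icc_of_distinct hdist n) fun l => lam l + 1
  simp only [← add_assoc] at h
  refine h.trans (sum_congr rfl fun j _ => ?_)
  ring

lemma intervalIntegrable_muntzK_mul {lam : ℕ → ℝ} (hpos : ∀ j, 1 ≤ j → lam j > -(1 / 2 : ℝ))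
    (n m : ℕ) : IntervalIntegrable (fun x => muntzK lam n x * muntzK lam m x) volume 0 1 :=
  (intervalIntegrable_and_integral_sum_rpow_mul_sum_rpow (Icc 1 n) (Icc 1 m)
    (fun j hj => hpos j (mem_Icc.mp hj).1) (fun j hj => hpos j (mem_Icc.mp hj).1) _ _).1

lemma integral_muntzK_mul {lam : ℕ → ℝ} (hpos : ∀ j, 1 ≤ j → lam j > -(1 / 2 : ℝ))
    (hdist : ∀ j k, 1 ≤ j → 1 ≤ k → j ≠ k → lam j ≠ lam k) {m n : ℕ} (hmn : m ≤ n) :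
    ∫ x in (0 : ℝ)..1, muntzK lam n x * muntzK lam m x = ∑ j ∈ Icc 1 m, (1 + 2 * lam j) := by
  refine (intervalIntegrable_and_integral_sum_rpow_mul_sum_rpow (Icc 1 n) (Icc 1 m)
    (fun j hj => hpos j (mem_Icc.mp hj).1) (fun j hj => hpos j (mem_Icc.mp hj).1)
    (muntzA lam n) (muntzA lam m)).2.trans ?_
  rw [← sum_muntzA hdist]
  refine sum_congr rfl fun k hk => ?_
  rw [sum_muntzA_div hpos hdist (Icc_subset_Icc_right hmn hk), mul_one]

lemma continuousOn_muntzK (lam : ℕ → ℝ) (n : ℕ) : ContinuousOn (muntzK lam n) (Set.Ioi 0) := by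
  unfold muntzK
  refine continuousOn_finsetSum _ fun j _ => continuousOn_const.mul fun x hx => ?_
  exact (Real.continuousAt_rpow_const x _ (Or.inl (ne_of_gt hx))).continuousWithinAt

lemma hasDerivAt_muntzRho_one_div (lam : ℕ → ℝ) (n : ℕ) {v : ℝ} (hv : 0 < v) :
    HasDerivAt (fun v => muntzRho lam n (1 / v)) (muntzK lam n v / v) v := by
  have hcont : ContinuousOn (fun r => muntzK lam n (1 / r) / r) (Set.Ioi 0) := by
    refine ContinuousOn.div ((continuousOn_muntzK lam n).comp ?_ ?_) continuousOn_id ?_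
    · exact continuousOn_const.div continuousOn_id fun r hr => ne_of_gt hr
    · exact fun r hr => Set.mem_Ioi.mpr (one_div_pos.mpr hr)
    · exact fun r hr => ne_of_gt hr
  have hv' : 0 < 1 / v := one_div_pos.mpr hv
  have hint : IntervalIntegrable (fun r => muntzK lam n (1 / r) / r) volume 1 (1 / v) :=
    (hcont.mono fun r hr => (lt_min one_pos hv').trans_le hr.1).intervalIntegrable
  have hprim := integral_hasDerivAt_right hint
    (hcont.stronglyMeasurableAtFilter isOpen_Ioi _ hv') (hcont.continuousAt (Ioi_mem_nhds hv'))
  have hinv : HasDerivAt (fun v : ℝ => 1 / v) (-(v ^ 2)⁻¹) v := by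
    simpa only [one_div] using hasDerivAt_inv hv.ne'
  refine ((hprim.comp v hinv).const_sub 1).congr_deriv ?_
  rw [one_div_one_div]
  field_simp

theorem muntzRho_L2_estimate (lam : ℕ → ℝ)
    (hpos : ∀ j, 1 ≤ j → lam j > -(1/2 : ℝ))
    (hdist : ∀ j k, 1 ≤ j → 1 ≤ k → j ≠ k → lam j ≠ lam k) :
    ∀ m n : ℕ, 1 ≤ m → m < n →
      (∫ v in (0:ℝ)..1, (muntzRho lam n (1 / v) - muntzRho lam m (1 / v)) ^ 2)
          ≤ 4 * ∫ u in (0:ℝ)..1, (muntzK lam n u - muntzK lam m u) ^ 2 ∧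
        4 * (∫ u in (0:ℝ)..1, (muntzK lam n u - muntzK lam m u) ^ 2)
          = 4 * ∑ j ∈ Finset.Icc (m + 1) n, (1 + 2 * lam j) := by
  intro m n _ hmn
  have hsq : ∀ u, (muntzK lam n u - muntzK lam m u) ^ 2 =
      muntzK lam n u * muntzK lam n u - 2 * (muntzK lam n u * muntzK lam m u) +
        muntzK lam m u * muntzK lam m u := fun u => by ring
  have hnn := intervalIntegrable_muntzK_mul hpos n n
  have hnm := (intervalIntegrable_muntzK_mul hpos n m).const_mul 2
  have hmm := intervalIntegrable_muntzK_mul hpos m m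
  constructor
  · have hcont := (continuousOn_muntzK lam n).sub (continuousOn_muntzK lam m)
    refine (integral_congr fun v _ => ?_).trans_le (hardy_integral_sq_le
      (g := fun u => muntzK lam n u - muntzK lam m u)
      (H := fun v => -(muntzRho lam n (1 / v) - muntzRho lam m (1 / v))) hcont ?_ ?_ ?_)
    · exact (neg_sq _).symm
    · simp only [hsq]
      exact (hnn.sub hnm).add hmm
    · intro v hv
      refine ((hasDerivAt_muntzRho_one_div lam n hv).sub
        (hasDerivAt_muntzRho_one_div lam m hv)).neg.congr_deriv ?_
      rw [sub_div]
    · simp [muntzRho]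
  · congr 1
    simp only [hsq]
    rw [integral_add (hnn.sub hnm) hmm, integral_sub hnn hnm,
      intervalIntegral.integral_const_mul, integral_muntzK_mul hpos hdist le_rfl,
      integral_muntzK_mul hpos hdist hmn.le, integral_muntzK_mul hpos hdist le_rfl]
    have hdisj := sum_Ioc_consecutive (fun j => 1 + 2 * lam j) (Nat.zero_le m) hmn.le
    simp only [← Icc_add_one_left_eq_Ioc, zero_add] at hdisj
    linarith
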